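/- Let $S \in [0,1]^{m \times n}$ be a scoring matrix with $m \ge 2$, for each method $i \in [m]$ let $\mu_i = \frac{1}{n}\sum_{j=1}^n S_{ij}$, and suppose there is a unique best method $i^* = \arg\max_i \mu_i$. Define the hardness quantity $H_1 = \sum_{i=1, i \neq i^*}^m \frac{1}{(\mu_i - \mu_{i^*})^2}$. Run the UCB-E algorithm with total evaluation budget $T$ (with $m \le T \le mn$) and exploration parameter $a = \frac{25}{36}\cdot\frac{T-m}{H_1}$. Then the probability that the algorithm returns $i^*$ is at least $1 - 2\,T\,m\,\exp\!\left(-\frac{T-m}{18 H_1}\right)$. -/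

import Mathlib

open scoped Classical BigOperators

noncomputable section UCBE

variable {m n : ℕ}

/-- Number of observed entries in row `i` of the observation matrix `O`. -/
def obsCount (O : Fin m → Fin n → Bool) (i : Fin m) : ℕ :=
  (Finset.univ.filter fun j => O i j = true).card

/-- Sum of the observed scores of method `i`. -/
def obsSum (S : Fin m → Fin n → ℝ) (O : Fin m → Fin n → Bool) (i : Fin m) : ℝ :=
  ∑ j ∈ Finset.univ.filter (fun j => O i j = true), S i j

/-- Empirical mean score of method `i` over the observed entries. -/
def empMean (S : Fin m → Fin n → ℝ) (O : Fin m → Fin n → Bool) (i : Fin m) : ℝ :=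
  obsSum S O i / (obsCount O i : ℝ)

/-- Upper confidence bound of method `i`; `+∞` when method `i` has no observations. -/
def ucb (S : Fin m → Fin n → ℝ) (a : ℝ) (O : Fin m → Fin n → Bool) (i : Fin m) : EReal :=
  if obsCount O i = 0 then ⊤
  else ((empMean S O i + Real.sqrt (a / (obsCount O i : ℝ)) : ℝ) : EReal)

/-- Methods that still have unobserved entries. -/
def candidates (O : Fin m → Fin n → Bool) : Finset (Fin m) :=
  Finset.univ.filter fun i => ∃ j, O i j = false

/-- Among the methods that still have unobserved entries, those maximizing the UCB. -/
def bestArms (S : Fin m → Fin n → ℝ) (a : ℝ) (O : Fin m → Fin n → Bool) : Finset (Fin m) :=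
  (candidates O).filter fun i => ∀ k ∈ candidates O, ucb S a O k ≤ ucb S a O i

/-- Reveal entry `(i, j)` of the observation matrix. -/
def reveal (O : Fin m → Fin n → Bool) (i : Fin m) (j : Fin n) : Fin m → Fin n → Bool :=
  fun i' j' => if i' = i ∧ j' = j then true else O i' j'

/-- One step of the UCB-E algorithm: pick a method with maximal UCB uniformly at random
(among methods with unobserved entries), then pick one of its unobserved examples
uniformly at random and reveal it. -/
def ucbeStep (S : Fin m → Fin n → ℝ) (a : ℝ) (O : Fin m → Fin n → Bool) :
    PMF (Fin m → Fin n → Bool) :=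
  if h : (bestArms S a O).Nonempty then
    (PMF.uniformOfFinset _ h).bind fun i =>
      if h2 : (Finset.univ.filter fun j => O i j = false).Nonempty then
        (PMF.uniformOfFinset _ h2).map fun j => reveal O i j
      else PMF.pure O
  else PMF.pure O

/-- The distribution over observation matrices after `t` steps of UCB-E, starting from the
all-zero observation matrix. -/
def ucbeRun (S : Fin m → Fin n → ℝ) (a : ℝ) : ℕ → PMF (Fin m → Fin n → Bool)
  | 0 => PMF.pure fun _ _ => false
  | t + 1 => (ucbeRun S a t).bind (ucbeStep S a)

/-- Output of the UCB-E algorithm with budget `T`: run `T` steps and return a method with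
maximal empirical mean (ties broken uniformly at random). -/
def ucbeOutput (hm : 0 < m) (S : Fin m → Fin n → ℝ) (a : ℝ) (T : ℕ) : PMF (Fin m) :=
  (ucbeRun S a T).bind fun O =>
    PMF.uniformOfFinset
      (Finset.univ.filter fun i => ∀ k, empMean S O k ≤ empMean S O i)
      (by
        haveI : Nonempty (Fin m) := ⟨⟨0, hm⟩⟩
        obtain ⟨b, -, hb⟩ :=
          Finset.exists_max_image (Finset.univ : Finset (Fin m)) (empMean S O)
            Finset.univ_nonempty
        exact ⟨b, Finset.mem_filter.2 ⟨Finset.mem_univ b, fun k => hb k (Finset.mem_univ k)⟩⟩)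

end UCBE

section UCBEProof

/-- Expectation of an extended nonnegative function under a PMF. -/
noncomputable def pmfEx {α : Type*} (p : PMF α) (f : α → ENNReal) : ENNReal := ∑' x, p x * f x

lemma pmfEx_bind {α β : Type*} (p : PMF α) (q : α → PMF β) (f : β → ENNReal) :
    pmfEx (p.bind q) f = pmfEx p (fun x => pmfEx (q x) f) := by
  unfold pmfEx
  simp only [PMF.bind_apply, ← ENNReal.tsum_mul_right, ← ENNReal.tsum_mul_left]
  rw [ENNReal.tsum_comm]
  simp only [mul_assoc]

lemma pmfEx_pure {α : Type*} (x : α) (f : α → ENNReal) : pmfEx (PMF.pure x) f = f x := by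
  unfold pmfEx
  rw [tsum_eq_single x]
  · simp
  · intro y hy
    simp [PMF.pure_apply, hy]

lemma pmfEx_map {α β : Type*} (p : PMF α) (g : α → β) (f : β → ENNReal) :
    pmfEx (p.map g) f = pmfEx p (fun x => f (g x)) := by
  unfold PMF.map
  rw [pmfEx_bind]
  simp only [Function.comp, pmfEx_pure]

lemma pmfEx_mono {α : Type*} (p : PMF α) (f g : α → ENNReal)
    (h : ∀ x ∈ p.support, f x ≤ g x) : pmfEx p f ≤ pmfEx p g := by
  unfold pmfEx
  refine ENNReal.tsum_le_tsum fun x => ?_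
  by_cases hx : p x = 0
  · simp [hx]
  · gcongr
    exact h x ((PMF.mem_support_iff _ _).2 hx)

lemma pmfEx_const {α : Type*} (p : PMF α) (c : ENNReal) : pmfEx p (fun _ => c) = c := by
  unfold pmfEx
  rw [ENNReal.tsum_mul_right, p.tsum_coe, one_mul]

lemma pmfEx_le {α : Type*} (p : PMF α) (f : α → ENNReal) (c : ENNReal)
    (h : ∀ x ∈ p.support, f x ≤ c) : pmfEx p f ≤ c :=
  (pmfEx_mono p f (fun _ => c) h).trans_eq (pmfEx_const p c)

lemma pmfEx_uniform {α : Type*} (s : Finset α) (hs : s.Nonempty) (f : α → ENNReal) :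
    pmfEx (PMF.uniformOfFinset s hs) f = ∑ x ∈ s, (s.card : ENNReal)⁻¹ * f x := by
  unfold pmfEx
  rw [tsum_eq_sum (s := s)]
  · refine Finset.sum_congr rfl fun x hx => ?_
    rw [PMF.uniformOfFinset_apply_of_mem hs hx]
  · intro x hx
    rw [PMF.uniformOfFinset_apply_of_notMem hs hx, zero_mul]

/-- Expected value of `F` after adding `k` uniformly random new elements to `A`. -/
noncomputable def addRand {n : ℕ} (F : Finset (Fin n) → ENNReal) :
    ℕ → Finset (Fin n) → ENNReal
  | 0, A => F A
  | k + 1, A => ∑ j ∈ Aᶜ, ((Aᶜ).card : ENNReal)⁻¹ * addRand F k (insert j A)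

lemma tangent_aux (d z : ℝ) (hz : z ≤ 1) (k : ℕ) (hk : (k : ℝ) ≤ d) :
    (1 + d * z) * (1 - z) ^ k ≤ 1 + (d - k) * z := by
  induction k with
  | zero => simp
  | succ k ih =>
    push_cast at hk ⊢
    have h1 := ih (by linarith)
    have h2 := mul_le_mul_of_nonneg_right h1 (sub_nonneg.2 hz)
    rw [pow_succ]
    nlinarith [mul_nonneg (show (0:ℝ) ≤ d - k by linarith) (sq_nonneg z)]

/-- Averaged inequality used in the induction for sampling without replacement. -/
lemma avg_aux {ι : Type*} (s : Finset ι) (x : ι → ℝ) (hx : ∀ i ∈ s, 0 < x i) (k : ℕ)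
    (hk : k + 1 ≤ s.card) :
    ∑ j ∈ s, (s.card : ℝ)⁻¹ * (x j * ((∑ i ∈ s, x i - x j) / ((s.card : ℝ) - 1)) ^ k) ≤
      ((∑ i ∈ s, x i) / s.card) ^ (k + 1) := by
  have hN : 0 < s.card := by omega
  have hne : s.Nonempty := Finset.card_pos.1 hN
  have hNr : (0:ℝ) < s.card := by exact_mod_cast hN
  have hX : 0 < ∑ i ∈ s, x i := Finset.sum_pos hx hne
  set X := ∑ i ∈ s, x i with hXd
  set N : ℝ := (s.card : ℝ) with hNd
  set M := X / N with hM
  have hMpos : 0 < M := div_pos hX hNr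
  have hXM : X = N * M := by rw [hM]; field_simp
  have hkN : (k : ℝ) ≤ N - 1 := by
    have : ((k + 1 : ℕ) : ℝ) ≤ s.card := by exact_mod_cast hk
    push_cast at this; linarith
  rw [← Finset.mul_sum]
  suffices h : ∑ j ∈ s, x j * ((X - x j) / (N - 1)) ^ k ≤ N * M ^ (k + 1) by
    rw [inv_mul_le_iff₀ hNr]; exact h
  rcases eq_or_lt_of_le (show (1:ℝ) ≤ N by rw [hNd]; exact_mod_cast hN) with h1 | h1
  · have hk0 : k = 0 := by
      have : (k : ℝ) ≤ 0 := by linarith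
      exact_mod_cast le_antisymm this (by positivity)
    subst hk0
    simp only [pow_zero, mul_one, zero_add, pow_one]
    exact (hXd.symm.trans hXM).le
  · have key : ∀ j ∈ s, x j * ((X - x j) / (N - 1)) ^ k ≤
        M ^ (k + 1) + (1 - k / (N - 1)) * M ^ k * (x j - M) := by
      intro j hj
      have hd : 0 < N - 1 := by linarith
      have hle : x j ≤ X := Finset.single_le_sum (fun i hi => (hx i hi).le) hj
      have hz : (x j / M - 1) / (N - 1) ≤ 1 := by
        rw [div_le_one hd]
        have : x j / M ≤ N := by rw [div_le_iff₀ hMpos, ← hXM]; exact hle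
        linarith
      have := tangent_aux (N - 1) ((x j / M - 1) / (N - 1)) hz k hkN
      have e1 : 1 + (N - 1) * ((x j / M - 1) / (N - 1)) = x j / M := by
        field_simp; ring
      have e2 : 1 - (x j / M - 1) / (N - 1) = ((X - x j) / (N - 1)) / M := by
        rw [hXM]; field_simp; ring
      rw [e1, e2, div_pow] at this
      have h3 := mul_le_mul_of_nonneg_left this (pow_pos hMpos (k + 1)).le
      have e3 : M ^ (k + 1) * (x j / M * (((X - x j) / (N - 1)) ^ k / M ^ k)) =
        x j * ((X - x j) / (N - 1)) ^ k := by
        rw [pow_succ]; field_simp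
      have e4 : M ^ (k + 1) * (1 + (N - 1 - k) * ((x j / M - 1) / (N - 1))) =
        M ^ (k + 1) + (1 - k / (N - 1)) * M ^ k * (x j - M) := by
        rw [pow_succ]; field_simp
      rw [e3, e4] at h3
      exact h3
    refine (Finset.sum_le_sum key).trans_eq ?_
    rw [Finset.sum_add_distrib, ← Finset.mul_sum, Finset.sum_sub_distrib]
    simp only [Finset.sum_const, nsmul_eq_mul, ← hXd, ← hNd]
    rw [hXM]; ring

lemma addRand_mgf {n : ℕ} (x : Fin n → ℝ) (hx : ∀ j, 0 < x j) (c : ℝ) (hc : 0 ≤ c)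
    (F : Finset (Fin n) → ENNReal) (hF : ∀ B, F B ≤ ENNReal.ofReal (c * ∏ j ∈ B, x j)) (k : ℕ) :
    ∀ A : Finset (Fin n), k ≤ (Aᶜ).card →
      addRand F k A ≤ ENNReal.ofReal (c * (∏ j ∈ A, x j) *
        ((∑ j ∈ Aᶜ, x j) / ((Aᶜ).card : ℝ)) ^ k) := by
  induction k with
  | zero => intro A _; simpa [addRand] using hF A
  | succ k ih =>
    intro A hA
    have hP : 0 ≤ ∏ j ∈ A, x j := Finset.prod_nonneg fun j _ => (hx j).le
    have hNpos : (0:ℝ) < (Aᶜ).card := by exact_mod_cast (by omega : 0 < (Aᶜ).card)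
    have hX : 0 ≤ ∑ j ∈ Aᶜ, x j := Finset.sum_nonneg fun j _ => (hx j).le
    have step : ∀ j ∈ Aᶜ, ((Aᶜ).card : ENNReal)⁻¹ * addRand F k (insert j A) ≤
        ENNReal.ofReal ((c * ∏ j ∈ A, x j) * ((((Aᶜ).card : ℝ))⁻¹ *
          (x j * ((∑ i ∈ Aᶜ, x i - x j) / (((Aᶜ).card : ℝ) - 1)) ^ k))) := by
      intro j hj
      have hjA : j ∉ A := Finset.mem_compl.1 hj
      have hins : (insert j A)ᶜ = (Aᶜ).erase j := by
        rw [Finset.compl_insert]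
      have hcard : ((insert j A)ᶜ).card = (Aᶜ).card - 1 := by
        rw [hins, Finset.card_erase_of_mem hj]
      have h1 := ih (insert j A) (by omega)
      rw [hcard, hins, Finset.prod_insert hjA, Nat.cast_sub (by omega)] at h1
      have hs : ∑ i ∈ (Aᶜ).erase j, x i = ∑ i ∈ Aᶜ, x i - x j := by
        rw [← Finset.sum_erase_add _ _ hj]; ring
      rw [hs, Nat.cast_one] at h1
      have hinv : ((Aᶜ).card : ENNReal)⁻¹ = ENNReal.ofReal (((Aᶜ).card : ℝ)⁻¹) := by
        rw [ENNReal.ofReal_inv_of_pos hNpos, ENNReal.ofReal_natCast]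
      rw [hinv]
      refine (mul_le_mul_right h1 _).trans_eq ?_
      rw [← ENNReal.ofReal_mul (by positivity)]
      congr 1; ring
    change ∑ j ∈ Aᶜ, ((Aᶜ).card : ENNReal)⁻¹ * addRand F k (insert j A) ≤ _
    refine (Finset.sum_le_sum step).trans ?_
    rw [← ENNReal.ofReal_sum_of_nonneg]
    · rw [← Finset.mul_sum]
      exact ENNReal.ofReal_le_ofReal (mul_le_mul_of_nonneg_left
        (avg_aux (Aᶜ) x (fun i _ => hx i) k hA) (mul_nonneg hc hP))
    · intro j hj
      have h1 : 0 ≤ ∑ i ∈ Aᶜ, x i - x j :=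
        sub_nonneg.2 (Finset.single_le_sum (fun i _ => (hx i).le) hj)
      have h2 : (0:ℝ) ≤ ((Aᶜ).card : ℝ) - 1 := by
        have : (1:ℝ) ≤ (Aᶜ).card := by exact_mod_cast (by omega : 1 ≤ (Aᶜ).card)
        linarith
      have := (hx j).le
      positivity

lemma addRand_add {n : ℕ} (F G : Finset (Fin n) → ENNReal) (k : ℕ) :
    ∀ A, addRand (fun B => F B + G B) k A = addRand F k A + addRand G k A := by
  induction k with
  | zero => intro A; rfl
  | succ k ih => intro A; simp [addRand, ih, mul_add, Finset.sum_add_distrib]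

lemma addRand_mono {n : ℕ} (F G : Finset (Fin n) → ENNReal) (h : ∀ B, F B ≤ G B) (k : ℕ) :
    ∀ A, addRand F k A ≤ addRand G k A := by
  induction k with
  | zero => intro A; exact h A
  | succ k ih =>
    intro A
    exact Finset.sum_le_sum fun j _ => mul_le_mul_right (ih _) _

lemma addRand_zero {n : ℕ} (F : Finset (Fin n) → ENNReal) (h : ∀ B, F B = 0) (k : ℕ) :
    ∀ A, addRand F k A = 0 := by
  induction k with
  | zero => intro A; exact h A
  | succ k ih =>
    intro A
    exact Finset.sum_eq_zero fun j _ => by rw [ih, mul_zero]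

open MeasureTheory ProbabilityTheory in
/-- Hoeffding's lemma for the uniform distribution on `Fin n`. -/
lemma hoeffding_fin {n : ℕ} (hn : 0 < n) (v : Fin n → ℝ) (hv : ∀ j, v j ∈ Set.Icc (0:ℝ) 1)
    (l : ℝ) :
    (∑ j, Real.exp (l * (v j - (∑ i, v i) / n))) / n ≤ Real.exp (l ^ 2 / 8) := by
  have : Nonempty (Fin n) := ⟨⟨0, hn⟩⟩
  let P : Measure (Fin n) := (PMF.uniformOfFintype (Fin n)).toMeasure
  have hint : ∀ f : Fin n → ℝ, ∫ j, f j ∂P = (∑ j, f j) / n := by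
    intro f
    rw [PMF.integral_eq_sum]
    simp [PMF.uniformOfFintype_apply, Finset.mul_sum, div_eq_inv_mul]
  have h := hasSubgaussianMGF_of_mem_Icc (μ := P) (X := v) (a := 0) (b := 1)
    (measurable_of_finite v).aemeasurable (Filter.Eventually.of_forall hv)
  have h2 := h.mgf_le l
  rw [hint] at h2
  unfold mgf at h2
  rw [hint] at h2
  refine h2.trans_eq ?_
  congr 1
  norm_num
  ring

/-- One-sided tail indicator. -/
lemma tail_aux {n : ℕ} (hn : 0 < n) (v : Fin n → ℝ) (hv : ∀ j, v j ∈ Set.Icc (0:ℝ) 1)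
    (s : ℕ) (hs : s ≤ n) (e : ℝ) (l : ℝ) (hl : l ^ 2 = (4 * e) ^ 2)
    (F : Finset (Fin n) → ENNReal)
    (hF : ∀ B, F B ≤ 1) (hF2 : ∀ B, F B ≠ 0 → B.card = s ∧
      4 * e * (s * e) ≤ l * (∑ j ∈ B, (v j - (∑ i, v i) / n))) :
    addRand F s ∅ ≤ ENNReal.ofReal (Real.exp (-(2 * s * e ^ 2))) := by
  have h := addRand_mgf (fun j => Real.exp (l * (v j - (∑ i, v i) / n)))
    (fun j => Real.exp_pos _) (Real.exp (-(4 * e * (s * e)))) (Real.exp_pos _).le F ?_ s ∅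
    (by simpa using hs)
  · refine h.trans (ENNReal.ofReal_le_ofReal ?_)
    simp only [Finset.prod_empty, mul_one, Finset.compl_empty, Finset.card_univ, Fintype.card_fin]
    have h2 := pow_le_pow_left₀ (by positivity) (hoeffding_fin hn v hv l) s
    refine (mul_le_mul_of_nonneg_left h2 (Real.exp_pos _).le).trans_eq ?_
    rw [← Real.exp_nat_mul, ← Real.exp_add, hl]
    congr 1; ring
  · intro B
    by_cases hB : F B = 0
    · simp [hB]
    · refine (hF B).trans ?_
      rw [← ENNReal.ofReal_one]
      refine ENNReal.ofReal_le_ofReal ?_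
      rw [← Real.exp_sum, ← Real.exp_add, ← Finset.mul_sum]
      apply Real.one_le_exp
      have := (hF2 B hB).2
      linarith

/-- Indicator that a sample set `B` of size `s` has mean deviating from the population mean. -/
noncomputable def badInd {n : ℕ} (v : Fin n → ℝ) (a : ℝ) (s : ℕ) (B : Finset (Fin n)) :
    ENNReal :=
  if B.card = s ∧ Real.sqrt (a / s) / 5 ≤ |(∑ j ∈ B, v j) / s - (∑ j, v j) / n| then 1 else 0

lemma badInd_bound {n : ℕ} (hn : 0 < n) (v : Fin n → ℝ) (hv : ∀ j, v j ∈ Set.Icc (0:ℝ) 1)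
    (a : ℝ) (ha : 0 < a) (s : ℕ) (hs : 1 ≤ s) :
    addRand (badInd v a s) s ∅ ≤ 2 * ENNReal.ofReal (Real.exp (-(2 * a / 25))) := by
  by_cases hsn : s ≤ n
  · set e := Real.sqrt (a / s) / 5 with he
    have hs0 : (0:ℝ) < s := by exact_mod_cast hs
    have he0 : 0 ≤ e := by positivity
    have hexp : 2 * s * e ^ 2 = 2 * a / 25 := by
      rw [he, div_pow, Real.sq_sqrt (by positivity)]; field_simp; norm_num
    set μ := (∑ j, v j) / n with hμ
    let F1 : Finset (Fin n) → ENNReal := fun B =>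
      if B.card = s ∧ e ≤ (∑ j ∈ B, v j) / s - μ then 1 else 0
    let F2 : Finset (Fin n) → ENNReal := fun B =>
      if B.card = s ∧ e ≤ -((∑ j ∈ B, v j) / s - μ) then 1 else 0
    have hsum : ∀ B : Finset (Fin n), B.card = s →
        ∑ j ∈ B, (v j - μ) = s * ((∑ j ∈ B, v j) / s - μ) := by
      intro B hB
      rw [Finset.sum_sub_distrib, Finset.sum_const, hB, nsmul_eq_mul]
      field_simp
    have hle : ∀ B, badInd v a s B ≤ F1 B + F2 B := by
      intro B
      unfold badInd
      split_ifs with h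
      · rcases le_abs.1 h.2 with h2 | h2
        · have : F1 B = 1 := if_pos ⟨h.1, h2⟩
          rw [this]; exact le_self_add
        · have : F2 B = 1 := if_pos ⟨h.1, h2⟩
          rw [this]; exact le_add_self
      · exact zero_le
    refine (addRand_mono _ _ hle s ∅).trans ?_
    rw [addRand_add, two_mul, ← hexp]
    refine add_le_add ?_ ?_
    · refine tail_aux hn v hv s hsn e (4 * e) rfl F1 ?_ ?_
      · intro B; simp only [F1]; split_ifs <;> simp
      · intro B hB
        have h : B.card = s ∧ e ≤ (∑ j ∈ B, v j) / s - μ := by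
          by_contra hh; exact hB (if_neg hh)
        refine ⟨h.1, ?_⟩
        rw [← hμ, hsum B h.1]
        have := h.2
        gcongr
    · refine tail_aux hn v hv s hsn e (-(4 * e)) (by ring) F2 ?_ ?_
      · intro B; simp only [F2]; split_ifs <;> simp
      · intro B hB
        have h : B.card = s ∧ e ≤ -((∑ j ∈ B, v j) / s - μ) := by
          by_contra hh; exact hB (if_neg hh)
        refine ⟨h.1, ?_⟩
        rw [← hμ, hsum B h.1, neg_mul, ← mul_neg, ← mul_neg]
        have := h.2
        gcongr
  · rw [addRand_zero]
    · exact zero_le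
    · intro B
      unfold badInd
      rw [if_neg]
      rintro ⟨h, -⟩
      have := Finset.card_le_univ B
      simp at this
      omega

/-- Observed entries of row `i`. -/
def obsRow {m n : ℕ} (O : Fin m → Fin n → Bool) (i : Fin m) : Finset (Fin n) :=
  Finset.univ.filter fun j => O i j = true

lemma obsCount_eq {m n : ℕ} (O : Fin m → Fin n → Bool) (i : Fin m) :
    obsCount O i = (obsRow O i).card := by
  unfold obsCount obsRow
  congr

lemma obsSum_eq {m n : ℕ} (S : Fin m → Fin n → ℝ) (O : Fin m → Fin n → Bool) (i : Fin m) :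
    obsSum S O i = ∑ j ∈ obsRow O i, S i j := by
  unfold obsSum obsRow
  congr

lemma obsRow_reveal_self {m n : ℕ} (O : Fin m → Fin n → Bool) (i : Fin m) (j : Fin n) :
    obsRow (reveal O i j) i = insert j (obsRow O i) := by
  ext k
  simp [obsRow, reveal]

lemma obsRow_reveal_ne {m n : ℕ} (O : Fin m → Fin n → Bool) (i k : Fin m) (j : Fin n)
    (h : k ≠ i) : obsRow (reveal O i j) k = obsRow O k := by
  ext l
  simp [obsRow, reveal, h]

lemma unobs_eq {m n : ℕ} (O : Fin m → Fin n → Bool) (i : Fin m) :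
    (Finset.univ.filter fun j => O i j = false) = (obsRow O i)ᶜ := by
  ext l
  simp [obsRow]

/-- Potential of the pair `(i, s)`. -/
noncomputable def potV {m n : ℕ} (S : Fin m → Fin n → ℝ) (a : ℝ) (i : Fin m) (s : ℕ)
    (O : Fin m → Fin n → Bool) : ENNReal :=
  if (obsRow O i).card ≤ s then
    addRand (badInd (S i) a s) (s - (obsRow O i).card) (obsRow O i) else 0

/-- Total potential. -/
noncomputable def potX {m n : ℕ} (S : Fin m → Fin n → ℝ) (a : ℝ) (T : ℕ)
    (O : Fin m → Fin n → Bool) : ENNReal :=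
  ∑ i, ∑ s ∈ Finset.Icc 1 T, potV S a i s O

lemma potV_step {m n : ℕ} (S : Fin m → Fin n → ℝ) (a : ℝ) (i k : Fin m) (s : ℕ)
    (O : Fin m → Fin n → Bool) (h : ((obsRow O k)ᶜ).Nonempty) :
    ∑ j ∈ (obsRow O k)ᶜ, (((obsRow O k)ᶜ).card : ENNReal)⁻¹ * potV S a i s (reveal O k j) ≤
      potV S a i s O := by
  by_cases hik : i = k
  · subst hik
    have hc : ∀ j ∈ (obsRow O i)ᶜ, (insert j (obsRow O i)).card = (obsRow O i).card + 1 :=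
      fun j hj => Finset.card_insert_of_notMem (Finset.mem_compl.1 hj)
    by_cases hs : (obsRow O i).card + 1 ≤ s
    · obtain ⟨q, hq⟩ := Nat.exists_eq_add_of_le hs
      have e1 : potV S a i s O = addRand (badInd (S i) a s) (q + 1) (obsRow O i) := by
        unfold potV
        rw [if_pos (by omega)]
        congr 1
        omega
      rw [e1]
      apply le_of_eq
      change _ = ∑ j ∈ (obsRow O i)ᶜ, (((obsRow O i)ᶜ).card : ENNReal)⁻¹ *
        addRand (badInd (S i) a s) q (insert j (obsRow O i))
      refine Finset.sum_congr rfl fun j hj => ?_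
      unfold potV
      rw [obsRow_reveal_self, hc j hj, if_pos hs]
      congr 2
      omega
    · refine le_trans (le_of_eq (Finset.sum_eq_zero fun j hj => ?_)) zero_le
      unfold potV
      rw [obsRow_reveal_self, hc j hj, if_neg hs, mul_zero]
  · have e : ∀ j, potV S a i s (reveal O k j) = potV S a i s O := by
      intro j
      unfold potV
      rw [obsRow_reveal_ne O k i j hik]
    simp only [e, Finset.sum_const, nsmul_eq_mul]
    rw [← mul_assoc, ENNReal.mul_inv_cancel, one_mul]
    · exact_mod_cast (Finset.card_pos.2 h).ne'
    · exact ENNReal.natCast_ne_top _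

lemma potX_step {m n : ℕ} (S : Fin m → Fin n → ℝ) (a : ℝ) (T : ℕ) (k : Fin m)
    (O : Fin m → Fin n → Bool) (h : ((obsRow O k)ᶜ).Nonempty) :
    ∑ j ∈ (obsRow O k)ᶜ, (((obsRow O k)ᶜ).card : ENNReal)⁻¹ * potX S a T (reveal O k j) ≤
      potX S a T O := by
  unfold potX
  simp only [Finset.mul_sum]
  rw [Finset.sum_comm]
  refine Finset.sum_le_sum fun i _ => ?_
  rw [Finset.sum_comm]
  exact Finset.sum_le_sum fun s _ => potV_step S a i k s O h

/-- `O'` is a possible successor of `O`. -/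
def isSucc {m n : ℕ} (S : Fin m → Fin n → ℝ) (a : ℝ) (O O' : Fin m → Fin n → Bool) : Prop :=
  ∃ k ∈ bestArms S a O, ∃ j ∈ (obsRow O k)ᶜ, O' = reveal O k j

lemma bestArms_unobs {m n : ℕ} (S : Fin m → Fin n → ℝ) (a : ℝ) (O : Fin m → Fin n → Bool)
    (k : Fin m) (hk : k ∈ bestArms S a O) : ((obsRow O k)ᶜ).Nonempty := by
  unfold bestArms candidates at hk
  simp only [Finset.mem_filter, Finset.mem_univ, true_and] at hk
  obtain ⟨⟨j, hj⟩, -⟩ := hk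
  exact ⟨j, by simp [obsRow, hj]⟩

/-- The expectation of the next state is controlled arm by arm. -/
lemma step_le {m n : ℕ} (S : Fin m → Fin n → ℝ) (a : ℝ) (O : Fin m → Fin n → Bool)
    (hne : (bestArms S a O).Nonempty) (f : (Fin m → Fin n → Bool) → ENNReal) (c : ENNReal)
    (h : ∀ k ∈ bestArms S a O,
      ∑ j ∈ (obsRow O k)ᶜ, (((obsRow O k)ᶜ).card : ENNReal)⁻¹ * f (reveal O k j) ≤ c) :
    pmfEx (ucbeStep S a O) f ≤ c := by
  unfold ucbeStep
  rw [dif_pos hne, pmfEx_bind]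
  refine pmfEx_le _ _ _ fun k hk => ?_
  have hk' : k ∈ bestArms S a O := by simpa using hk
  have h2 : (Finset.univ.filter fun j => O k j = false).Nonempty := by
    rw [unobs_eq]; exact bestArms_unobs S a O k hk'
  rw [dif_pos h2, pmfEx_map, pmfEx_uniform]
  simp only [unobs_eq]
  exact h k hk'

lemma support_step {m n : ℕ} (S : Fin m → Fin n → ℝ) (a : ℝ) (O O' : Fin m → Fin n → Bool)
    (hne : (bestArms S a O).Nonempty) (h : O' ∈ (ucbeStep S a O).support) :
    isSucc S a O O' := by
  unfold ucbeStep at h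
  rw [dif_pos hne, PMF.mem_support_bind_iff] at h
  obtain ⟨k, hk, h⟩ := h
  have hk' : k ∈ bestArms S a O := by simpa using hk
  have h2 : (Finset.univ.filter fun j => O k j = false).Nonempty := by
    rw [unobs_eq]; exact bestArms_unobs S a O k hk'
  rw [dif_pos h2, PMF.mem_support_map_iff] at h
  obtain ⟨j, hj, h⟩ := h
  refine ⟨k, hk', j, ?_, h.symm⟩
  rw [← unobs_eq]
  simpa using hj

lemma bestArms_nonempty {m n : ℕ} (S : Fin m → Fin n → ℝ) (a : ℝ) (O : Fin m → Fin n → Bool)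
    (h : ∑ i, (obsRow O i).card < m * n) : (bestArms S a O).Nonempty := by
  have hc : (candidates O).Nonempty := by
    by_contra hc
    rw [Finset.not_nonempty_iff_eq_empty] at hc
    have hfull : ∀ i, (obsRow O i).card = n := by
      intro i
      have : obsRow O i = Finset.univ := by
        ext j
        have hi : i ∉ candidates O := by simp [hc]
        unfold candidates at hi
        simp only [Finset.mem_filter, Finset.mem_univ, true_and, not_exists] at hi
        simpa [obsRow] using hi j
      simp [this]
    simp [hfull] at h
  obtain ⟨b, hb, hb2⟩ := Finset.exists_max_image (candidates O) (ucb S a O) hc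
  exact ⟨b, Finset.mem_filter.2 ⟨hb, hb2⟩⟩

lemma card_succ {m n : ℕ} (S : Fin m → Fin n → ℝ) (a : ℝ) (O O' : Fin m → Fin n → Bool)
    (h : isSucc S a O O') :
    ∑ i, (obsRow O' i).card = ∑ i, (obsRow O i).card + 1 := by
  obtain ⟨k, -, j, hj, rfl⟩ := h
  rw [← Finset.add_sum_erase _ _ (Finset.mem_univ k),
    ← Finset.add_sum_erase _ (fun i => (obsRow O i).card) (Finset.mem_univ k)]
  rw [obsRow_reveal_self, Finset.card_insert_of_notMem (Finset.mem_compl.1 hj)]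
  rw [Finset.sum_congr rfl (g := fun i => (obsRow O i).card)]
  · ring
  · intro i hi
    rw [obsRow_reveal_ne _ _ _ _ (Finset.ne_of_mem_erase hi)]

lemma run_card {m n : ℕ} (S : Fin m → Fin n → ℝ) (a : ℝ) (t : ℕ) (ht : t ≤ m * n) :
    ∀ O ∈ (ucbeRun S a t).support, ∑ i, (obsRow O i).card = t := by
  induction t with
  | zero =>
    intro O hO
    simp [ucbeRun] at hO
    subst hO
    simp [obsRow]
  | succ t ih =>
    intro O hO
    rw [ucbeRun, PMF.mem_support_bind_iff] at hO
    obtain ⟨O₁, h1, h2⟩ := hO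
    have h3 := ih (by omega) O₁ h1
    rw [card_succ S a O₁ O (support_step S a O₁ O (bestArms_nonempty S a O₁ (by omega)) h2), h3]

/-- All empirical means are accurate. -/
def goodState {m n : ℕ} (S : Fin m → Fin n → ℝ) (a : ℝ) (μ : Fin m → ℝ)
    (O : Fin m → Fin n → Bool) : Prop :=
  ∀ i, 1 ≤ (obsRow O i).card →
    |(∑ j ∈ obsRow O i, S i j) / ((obsRow O i).card : ℝ) - μ i| <
      Real.sqrt (a / ((obsRow O i).card : ℝ)) / 5

/-- Information kept about the last pull of each arm. -/
def histState {m n : ℕ} (a : ℝ) (μ : Fin m → ℝ)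
    (O : Fin m → Fin n → Bool) : Prop :=
  ∀ j i, i ≠ j → (obsRow O i).card < n → 2 ≤ (obsRow O j).card →
    1 ≤ (obsRow O i).card ∧
    μ i + 4 / 5 * Real.sqrt (a / ((obsRow O i).card : ℝ)) ≤
      μ j + 6 / 5 * Real.sqrt (a / ((obsRow O j).card - 1 : ℝ))

lemma hist_succ {m n : ℕ} (S : Fin m → Fin n → ℝ) (a : ℝ) (ha : 0 < a) (μ : Fin m → ℝ)
    (O O' : Fin m → Fin n → Bool) (hg : goodState S a μ O) (hh : histState a μ O)
    (h : isSucc S a O O') : histState a μ O' := by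
  obtain ⟨k, hk, l, hl, rfl⟩ := h
  have hself : (obsRow (reveal O k l) k).card = (obsRow O k).card + 1 := by
    rw [obsRow_reveal_self, Finset.card_insert_of_notMem (Finset.mem_compl.1 hl)]
  intro j i hij hi hj
  by_cases hjk : j = k
  · subst hjk
    rw [obsRow_reveal_ne _ _ _ _ hij] at hi ⊢
    rw [hself] at hj ⊢
    have hcand : i ∈ candidates O := by
      unfold candidates
      rw [Finset.mem_filter]
      refine ⟨Finset.mem_univ _, ?_⟩
      by_contra hcon
      push Not at hcon
      have : obsRow O i = Finset.univ := by
        ext j'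
        simpa [obsRow] using hcon j'
      simp [this] at hi
    have hle := (Finset.mem_filter.1 hk).2 i hcand
    have hj1 : 1 ≤ (obsRow O j).card := by omega
    unfold ucb at hle
    rw [obsCount_eq, obsCount_eq, if_neg (show ¬ (obsRow O j).card = 0 by omega)] at hle
    by_cases hi0 : (obsRow O i).card = 0
    · rw [if_pos hi0] at hle
      exact absurd (top_le_iff.1 hle) (EReal.coe_ne_top _)
    · rw [if_neg hi0] at hle
      have hi1 : 1 ≤ (obsRow O i).card := by omega
      refine ⟨hi1, ?_⟩
      have hle' := EReal.coe_le_coe_iff.1 hle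
      unfold empMean at hle'
      rw [obsCount_eq, obsCount_eq, obsSum_eq, obsSum_eq] at hle'
      have g1 := abs_lt.1 (hg i hi1)
      have g2 := abs_lt.1 (hg j hj1)
      push_cast
      rw [add_sub_cancel_right]
      linarith [g1.1, g2.2]
  · rw [obsRow_reveal_ne _ _ _ _ hjk] at hj ⊢
    by_cases hik : i = k
    · subst hik
      rw [hself] at hi ⊢
      obtain ⟨h1, h2⟩ := hh j i hij (by omega) hj
      refine ⟨by omega, le_trans ?_ h2⟩
      have : (0:ℝ) < (obsRow O i).card := by exact_mod_cast h1
      push_cast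
      gcongr
      linarith
    · rw [obsRow_reveal_ne _ _ _ _ hik] at hi ⊢
      exact hh j i hij hi hj

lemma potX_of_not_good {m n : ℕ} (S : Fin m → Fin n → ℝ) (a : ℝ) (T : ℕ) (μ : Fin m → ℝ)
    (hμ : ∀ i, μ i = (∑ j, S i j) / n)
    (O : Fin m → Fin n → Bool) (hT : ∑ i, (obsRow O i).card ≤ T) (hg : ¬ goodState S a μ O) :
    1 ≤ potX S a T O := by
  unfold goodState at hg
  push Not at hg
  obtain ⟨i, hi, hbad⟩ := hg
  have hiT : (obsRow O i).card ≤ T :=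
    (Finset.single_le_sum (f := fun i => (obsRow O i).card) (fun _ _ => Nat.zero_le _)
      (Finset.mem_univ i)).trans hT
  have h1 : potV S a i (obsRow O i).card O = 1 := by
    unfold potV
    rw [if_pos le_rfl, Nat.sub_self]
    change badInd _ _ _ _ = 1
    unfold badInd
    rw [if_pos]
    refine ⟨rfl, ?_⟩
    rw [← hμ]
    exact hbad
  unfold potX
  calc (1 : ENNReal) = potV S a i (obsRow O i).card O := h1.symm
    _ ≤ ∑ s ∈ Finset.Icc 1 T, potV S a i s O :=
      Finset.single_le_sum (f := fun s => potV S a i s O) (fun _ _ => zero_le)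
        (Finset.mem_Icc.2 ⟨hi, hiT⟩)
    _ ≤ _ := Finset.single_le_sum (f := fun i => ∑ s ∈ Finset.Icc 1 T, potV S a i s O)
        (fun _ _ => zero_le) (Finset.mem_univ i)

/-- Killed potential. -/
noncomputable def potPhi {m n : ℕ} (S : Fin m → Fin n → ℝ) (a : ℝ) (T : ℕ) (μ : Fin m → ℝ)
    (O : Fin m → Fin n → Bool) : ENNReal :=
  if goodState S a μ O ∧ histState a μ O then min 1 (potX S a T O) else 1

lemma potPhi_le_one {m n : ℕ} (S : Fin m → Fin n → ℝ) (a : ℝ) (T : ℕ) (μ : Fin m → ℝ)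
    (O : Fin m → Fin n → Bool) : potPhi S a T μ O ≤ 1 := by
  unfold potPhi
  split_ifs
  · exact min_le_left _ _
  · exact le_rfl

lemma potPhi_step {m n : ℕ} (S : Fin m → Fin n → ℝ) (a : ℝ) (ha : 0 < a) (T : ℕ) (μ : Fin m → ℝ)
    (hμ : ∀ i, μ i = (∑ j, S i j) / n) (hTmn : T ≤ m * n)
    (O : Fin m → Fin n → Bool) (hT : ∑ i, (obsRow O i).card < T) :
    pmfEx (ucbeStep S a O) (potPhi S a T μ) ≤ potPhi S a T μ O := by
  have hone : pmfEx (ucbeStep S a O) (potPhi S a T μ) ≤ 1 :=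
    pmfEx_le _ _ _ fun O' _ => potPhi_le_one S a T μ O'
  by_cases hG : goodState S a μ O ∧ histState a μ O
  · have e : potPhi S a T μ O = min 1 (potX S a T O) := if_pos hG
    rw [e]
    refine le_min hone ?_
    have hne := bestArms_nonempty S a O (by omega)
    refine step_le S a O hne _ _ fun k hk => ?_
    refine le_trans (Finset.sum_le_sum fun j hj => mul_le_mul_right ?_ _)
      (potX_step S a T k O (bestArms_unobs S a O k hk))
    have hsucc : isSucc S a O (reveal O k j) := ⟨k, hk, j, hj, rfl⟩
    unfold potPhi
    split_ifs with hG'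
    · exact min_le_right _ _
    · refine potX_of_not_good S a T μ hμ _ ?_ ?_
      · rw [card_succ S a O _ hsucc]; omega
      · intro hg
        exact hG' ⟨hg, hist_succ S a ha μ O _ hG.1 hG.2 hsucc⟩
  · have e : potPhi S a T μ O = 1 := if_neg hG
    rw [e]
    exact hone

lemma potPhi_run {m n : ℕ} (S : Fin m → Fin n → ℝ) (a : ℝ) (ha : 0 < a) (T : ℕ) (μ : Fin m → ℝ)
    (hμ : ∀ i, μ i = (∑ j, S i j) / n) (hTmn : T ≤ m * n) (t : ℕ) (ht : t ≤ T) :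
    pmfEx (ucbeRun S a t) (potPhi S a T μ) ≤ potPhi S a T μ (fun _ _ => false) := by
  induction t with
  | zero => rw [ucbeRun, pmfEx_pure]
  | succ t ih =>
    rw [ucbeRun, pmfEx_bind]
    refine le_trans (pmfEx_mono _ _ _ fun O hO => ?_) (ih (by omega))
    refine potPhi_step S a ha T μ hμ hTmn O ?_
    rw [run_card S a t (by omega) O hO]
    omega

lemma potPhi_init {m n : ℕ} (hn : 0 < n) (S : Fin m → Fin n → ℝ)
    (hS : ∀ i j, S i j ∈ Set.Icc (0 : ℝ) 1) (a : ℝ) (ha : 0 < a) (T : ℕ) (μ : Fin m → ℝ) :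
    potPhi S a T μ (fun _ _ => false) ≤
      ENNReal.ofReal (2 * T * m * Real.exp (-(2 * a / 25))) := by
  have hrow : ∀ i : Fin m, obsRow (fun (_ : Fin m) (_ : Fin n) => false) i = ∅ := by
    intro i; simp [obsRow]
  have hG : goodState S a μ (fun _ _ => false) ∧
      histState (n := n) a μ (fun _ _ => false) := by
    constructor
    · intro i hi; simp [hrow] at hi
    · intro j i _ _ hj; simp [hrow] at hj
  have e : potPhi S a T μ (fun _ _ => false) = min 1 (potX S a T (fun _ _ => false)) := if_pos hG
  rw [e]
  refine (min_le_right _ _).trans ?_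
  unfold potX
  have hb : ∀ i : Fin m, ∀ s ∈ Finset.Icc 1 T, potV S a i s (fun _ _ => false) ≤
      2 * ENNReal.ofReal (Real.exp (-(2 * a / 25))) := by
    intro i s hs
    unfold potV
    rw [hrow, Finset.card_empty, if_pos (Nat.zero_le _), Nat.sub_zero]
    exact badInd_bound hn (S i) (hS i) a ha s (Finset.mem_Icc.1 hs).1
  refine (Finset.sum_le_sum fun i _ => Finset.sum_le_sum (hb i)).trans_eq ?_
  simp only [Finset.sum_const, nsmul_eq_mul, Nat.card_Icc, Finset.card_univ, Fintype.card_fin,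
    Nat.add_sub_cancel]
  rw [ENNReal.ofReal_mul (by positivity), ENNReal.ofReal_mul (by positivity),
    ENNReal.ofReal_mul (by positivity), ENNReal.ofReal_natCast, ENNReal.ofReal_natCast,
    ENNReal.ofReal_ofNat]
  ring

lemma sqrt_scale (a D g c : ℝ) (hD : 0 ≤ D) (hag : a = 25 / 36 * (g * D ^ 2)) :
    Real.sqrt (a / c) = 5 / 6 * D * Real.sqrt (g / c) := by
  have h : a / c = (5 / 6 * D) ^ 2 * (g / c) := by rw [hag]; ring
  rw [h, Real.sqrt_mul (by positivity), Real.sqrt_sq (by positivity)]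

/-- Deterministic core of the argument, in terms of pull counts. -/
lemma counts_core {m n : ℕ} (hn : 0 < n) (istar : Fin m) (μ D g : Fin m → ℝ) (a : ℝ)
    (c : Fin m → ℕ) (hcn : ∀ i, c i ≤ n) (hc1 : ∀ i, 1 ≤ c i)
    (hD : ∀ i, D i = μ istar - μ i) (hDpos : ∀ i, i ≠ istar → 0 < D i)
    (hg : ∀ i, i ≠ istar → 0 < g i)
    (hag : ∀ i, i ≠ istar → a = 25 / 36 * (g i * D i ^ 2))
    (hsum : ∑ i, ((c i : ℝ) - 1) = ∑ i ∈ Finset.univ.erase istar, g i)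
    (hh : ∀ j i, i ≠ j → c i < n → 2 ≤ c j →
      μ i + 4 / 5 * Real.sqrt (a / (c i : ℝ)) ≤ μ j + 6 / 5 * Real.sqrt (a / ((c j : ℝ) - 1)))
    (i : Fin m) (hi : i ≠ istar) :
    (c istar < n → Real.sqrt (g i / c istar) ≤ 1.42) ∧
    (c i < n → Real.sqrt (g i / c i) ≤ 3.7) := by
  have hcr : ∀ j, (1:ℝ) ≤ c j := fun j => by exact_mod_cast hc1 j
  -- splitting the sum
  have hsplit : ∀ (G : Fin m → ℝ), (∀ j, j ≠ istar → j ≠ i → (c j : ℝ) - 1 ≤ g j) →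
      g i ≤ ((c istar : ℝ) - 1) + ((c i : ℝ) - 1) := by
    intro _ hj
    have hmem : i ∈ Finset.univ.erase istar := Finset.mem_erase.2 ⟨hi, Finset.mem_univ _⟩
    rw [← Finset.add_sum_erase _ _ (Finset.mem_univ istar),
      ← Finset.add_sum_erase _ _ hmem, ← Finset.add_sum_erase _ _ hmem] at hsum
    have hle : ∑ j ∈ (Finset.univ.erase istar).erase i, ((c j : ℝ) - 1) ≤
        ∑ j ∈ (Finset.univ.erase istar).erase i, g j := by
      refine Finset.sum_le_sum fun j hjm => hj j ?_ ?_
      · exact Finset.ne_of_mem_erase (Finset.mem_of_mem_erase hjm)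
      · exact Finset.ne_of_mem_erase hjm
    linarith
  -- from a UCB comparison to a bound on the count
  have hcount : ∀ j, j ≠ istar → ∀ r : ℝ, 0 ≤ r → (2 ≤ c j →
      D j * r ≤ 6 / 5 * Real.sqrt (a / ((c j : ℝ) - 1))) → ((c j : ℝ) - 1) * r ^ 2 ≤ g j := by
    intro j hj r hr h
    by_cases h2 : 2 ≤ c j
    · have h2r : (2:ℝ) ≤ c j := by exact_mod_cast h2
      have hx : (0:ℝ) < (c j : ℝ) - 1 := by linarith
      have h3 := h h2
      rw [sqrt_scale a (D j) (g j) _ (hDpos j hj).le (hag j hj)] at h3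
      have h4 : r ≤ Real.sqrt (g j / ((c j : ℝ) - 1)) := by
        have : D j * r ≤ D j * Real.sqrt (g j / ((c j : ℝ) - 1)) := by linarith
        exact le_of_mul_le_mul_left this (hDpos j hj)
      have h5 := pow_le_pow_left₀ hr h4 2
      rw [Real.sq_sqrt (div_nonneg (hg j hj).le hx.le), le_div_iff₀ hx] at h5
      linarith
    · have : c j = 1 := by have := hc1 j; omega
      rw [this]; simpa using (hg j hj).le
  -- the conclusion from the key bound
  have hfin : g i ≤ 2 * ((c istar : ℝ) - 1) → c i < n → Real.sqrt (g i / c i) ≤ 3.7 := by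
    intro hgi hin
    have hgp := hg i hi
    have h2 : 2 ≤ c istar := by
      by_contra hcon
      have : c istar = 1 := by have := hc1 istar; omega
      rw [this] at hgi
      norm_num at hgi
      linarith
    have h2r : (2:ℝ) ≤ c istar := by exact_mod_cast h2
    have h3 := hh istar i hi hin h2
    rw [sqrt_scale a (D i) (g i) _ (hDpos i hi).le (hag i hi),
      sqrt_scale a (D i) (g i) _ (hDpos i hi).le (hag i hi)] at h3
    have h4 : Real.sqrt (g i / ((c istar : ℝ) - 1)) ≤ 1.42 := by
      rw [Real.sqrt_le_left (by norm_num), div_le_iff₀ (by linarith)]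
      norm_num
      nlinarith
    have h5 : D i * (2 / 3 * Real.sqrt (g i / c i)) ≤ D i * 2.42 := by
      have := hD i
      have := mul_le_mul_of_nonneg_left h4 (hDpos i hi).le
      nlinarith
    have h6 := le_of_mul_le_mul_left h5 (hDpos i hi)
    norm_num at h6 ⊢
    linarith
  by_cases hst : c istar < n
  · have hb : ∀ j, j ≠ istar → 2 ≤ c j →
        D j + 4 / 5 * Real.sqrt (a / c istar) ≤ 6 / 5 * Real.sqrt (a / ((c j : ℝ) - 1)) := by
      intro j hj h2
      have := hh j istar (Ne.symm hj) hst h2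
      rw [hD]; linarith
    have h1 := hsplit g (fun j hj _ => by
      have := hcount j hj 1 zero_le_one (fun h2 => by
        have := hb j hj h2
        have := Real.sqrt_nonneg (a / c istar)
        linarith)
      simpa using this)
    have hgp := hg i hi
    have hc0 : (0:ℝ) < c istar := by linarith [hcr istar]
    set q := Real.sqrt (g i / c istar) with hq
    have hqpos : 0 < q := Real.sqrt_pos.2 (by positivity)
    have h2 := hcount i hi (1 + 2 / 3 * q) (by positivity) (fun h2 => by
      have := hb i hi h2
      rw [sqrt_scale a (D i) (g i) (c istar) (hDpos i hi).le (hag i hi)] at this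
      linarith)
    have hstar1 : 2 ≤ c istar := by
      by_contra hcon
      have hc : c istar = 1 := by have := hc1 istar; omega
      rw [hc] at h1
      norm_num at h1
      have hx : 0 < (c i : ℝ) - 1 := by linarith
      nlinarith [mul_pos hx hqpos, mul_nonneg hx.le (sq_nonneg q)]
    have h2r : (2:ℝ) ≤ c istar := by exact_mod_cast hstar1
    have key : g i ≤ 2 * ((c istar : ℝ) - 1) := by
      by_contra hcon
      push Not at hcon
      have hq1 : 1 ≤ q := by
        rw [hq, Real.one_le_sqrt, one_le_div hc0]
        linarith
      have h5 : ((c i : ℝ) - 1) * (25 / 9) ≤ ((c i : ℝ) - 1) * (1 + 2 / 3 * q) ^ 2 := by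
        apply mul_le_mul_of_nonneg_left _ (by linarith [hcr i])
        nlinarith
      linarith
    refine ⟨fun _ => ?_, hfin key⟩
    rw [hq, Real.sqrt_le_left (by norm_num), div_le_iff₀ hc0]
    norm_num
    nlinarith
  · refine ⟨fun h => absurd h hst, fun hin => ?_⟩
    have hstn : c istar = n := le_antisymm (hcn _) (not_lt.1 hst)
    by_cases hq : Real.sqrt (g i / c i) ≤ 3 / 2
    · norm_num at hq ⊢; linarith
    · push Not at hq
      have h1 := hsplit g (fun j hj hji => by
        have := hcount j hj 1 zero_le_one (fun h2 => by
          have h3 := hh j i (Ne.symm hji) hin h2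
          rw [sqrt_scale a (D i) (g i) (c i) (hDpos i hi).le (hag i hi)] at h3
          have h4 := mul_le_mul_of_nonneg_left hq.le (hDpos i hi).le
          have := hD i
          have := hD j
          linarith)
        simpa using this)
      apply hfin _ hin
      have : (c i : ℝ) ≤ c istar := by rw [hstn]; exact_mod_cast hcn i
      linarith

/-- On a good final state, the best arm has strictly largest empirical mean. -/
lemma final_state {m n : ℕ} (hn : 0 < n)
    (S : Fin m → Fin n → ℝ)
    (μ : Fin m → ℝ) (hμ : ∀ i, μ i = (∑ j, S i j) / n)
    (istar : Fin m) (hstar : ∀ i, i ≠ istar → μ i < μ istar)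
    (H1 : ℝ) (hH0 : 0 < H1)
    (hH1 : H1 = ∑ i ∈ Finset.univ.erase istar, 1 / (μ i - μ istar) ^ 2)
    (T : ℕ) (hTm : m < T)
    (a : ℝ) (ha : a = 25 / 36 * (((T : ℝ) - m) / H1))
    (O : Fin m → Fin n → Bool) (hO : ∑ i, (obsRow O i).card = T)
    (hg : goodState S a μ O) (hh : histState a μ O) (i : Fin m) (hi : i ≠ istar) :
    empMean S O i < empMean S O istar := by
  have hcn : ∀ i, (obsRow O i).card ≤ n := fun i => by
    simpa using Finset.card_le_univ (obsRow O i)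
  have hc1 : ∀ i, 1 ≤ (obsRow O i).card := by
    intro k
    by_contra hk
    have hle : ∀ j, (obsRow O j).card ≤ 1 := by
      intro j
      by_cases hjk : k = j
      · subst hjk; omega
      · by_contra hj
        exact hk (hh j k hjk (by omega) (by omega)).1
    have := Finset.sum_le_sum (s := Finset.univ) (fun j _ => hle j)
    simp at this
    omega
  have hTr : (0:ℝ) < (T : ℝ) - m := by
    have : (m:ℝ) < T := by exact_mod_cast hTm
    linarith
  have hDpos : ∀ i, i ≠ istar → 0 < μ istar - μ i := fun i hi => sub_pos.2 (hstar i hi)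
  have core := counts_core hn istar μ (fun i => μ istar - μ i)
    (fun i => ((T:ℝ) - m) / H1 * (1 / (μ i - μ istar) ^ 2)) a (fun i => (obsRow O i).card)
    hcn hc1 (fun _ => rfl) hDpos ?_ ?_ ?_ (fun j i h1 h2 h3 => (hh j i h1 h2 h3).2) i hi
  · have hD := hDpos i hi
    have hag : a = 25 / 36 * (((T:ℝ) - m) / H1 * (1 / (μ i - μ istar) ^ 2) *
        (μ istar - μ i) ^ 2) := by
      have : (μ i - μ istar) ≠ 0 := by linarith
      rw [ha]
      have e : (μ istar - μ i) ^ 2 = (μ i - μ istar) ^ 2 := by ring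
      rw [e]
      field_simp
    set g := ((T:ℝ) - m) / H1 * (1 / (μ i - μ istar) ^ 2) with hgdef
    have hfull : ∀ k, ¬ (obsRow O k).card < n → empMean S O k = μ k := by
      intro k hk
      have hkn : (obsRow O k).card = n := le_antisymm (hcn k) (not_lt.1 hk)
      have hu : obsRow O k = Finset.univ := by
        rw [← Finset.card_eq_iff_eq_univ, hkn, Fintype.card_fin]
      unfold empMean
      rw [obsCount_eq, obsSum_eq, hkn, hu, hμ]
    have hdev : ∀ k, |empMean S O k - μ k| <
        (μ istar - μ i) / 6 * Real.sqrt (g / (obsRow O k).card) := by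
      intro k
      have h1 := hg k (hc1 k)
      rw [sqrt_scale a (μ istar - μ i) g _ hD.le hag] at h1
      unfold empMean
      rw [obsCount_eq, obsSum_eq]
      linarith
    have d1 : μ istar - (μ istar - μ i) * (1.42 / 6) ≤ empMean S O istar := by
      by_cases h : (obsRow O istar).card < n
      · have h1 := (abs_lt.1 (hdev istar)).1
        have h2 := mul_le_mul_of_nonneg_left (core.1 h) hD.le
        norm_num only at h2 ⊢
        linarith
      · rw [hfull istar h]
        norm_num
        linarith
    have d2 : empMean S O i ≤ μ i + (μ istar - μ i) * (3.7 / 6) := by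
      by_cases h : (obsRow O i).card < n
      · have h1 := (abs_lt.1 (hdev i)).2
        have h2 := mul_le_mul_of_nonneg_left (core.2 h) hD.le
        norm_num only at h2 ⊢
        linarith
      · rw [hfull i h]
        norm_num
        linarith
    norm_num at d1 d2
    linarith
  · intro k hk
    have : (μ k - μ istar) ≠ 0 := by linarith [hDpos k hk]
    positivity
  · intro k hk
    have : (μ k - μ istar) ≠ 0 := by linarith [hDpos k hk]
    have e : (μ istar - μ k) ^ 2 = (μ k - μ istar) ^ 2 := by ring
    rw [ha, e]
    field_simp
  · rw [← Finset.mul_sum, ← hH1, Finset.sum_sub_distrib, ← Nat.cast_sum, hO]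
    simp
    field_simp

end UCBEProof

/-- **Lower bound on the success probability of UCB-E.**
Let `S ∈ [0,1]^{m×n}` with `m ≥ 2`, let `μ i` be the mean score of method `i`, and suppose
`i*` is the unique best method.  With `H₁ = ∑_{i ≠ i*} 1/(μ i - μ i*)²`, budget
`m ≤ T ≤ m n`, and exploration parameter `a = (25/36) (T - m)/H₁`, the UCB-E algorithm
returns `i*` with probability at least `1 - 2 T m exp(-(T - m)/(18 H₁))`. -/
theorem ucbe_success_probability
    (m n : ℕ) (hm : 2 ≤ m) (hn : 0 < n)
    (S : Fin m → Fin n → ℝ) (hS : ∀ i j, S i j ∈ Set.Icc (0 : ℝ) 1)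
    (μ : Fin m → ℝ) (hμ : ∀ i, μ i = (∑ j, S i j) / n)
    (istar : Fin m) (hstar : ∀ i, i ≠ istar → μ i < μ istar)
    (H1 : ℝ) (hH1 : H1 = ∑ i ∈ Finset.univ.erase istar, 1 / (μ i - μ istar) ^ 2)
    (T : ℕ) (hTm : m ≤ T) (hTmn : T ≤ m * n)
    (a : ℝ) (ha : a = 25 / 36 * (((T : ℝ) - m) / H1)) :
    ENNReal.ofReal (1 - 2 * T * m * Real.exp (-(((T : ℝ) - m) / (18 * H1)))) ≤
      ucbeOutput (by omega) S a T istar := by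
  have hne : (Finset.univ.erase istar).Nonempty := by
    rw [← Finset.card_pos, Finset.card_erase_of_mem (Finset.mem_univ _), Finset.card_univ,
      Fintype.card_fin]
    omega
  have hH0 : 0 < H1 := by
    rw [hH1]
    refine Finset.sum_pos (fun i hi => ?_) hne
    have : μ i - μ istar ≠ 0 := by linarith [hstar i (Finset.ne_of_mem_erase hi)]
    positivity
  rcases eq_or_lt_of_le hTm with hEq | hlt
  · have h1 : (1:ℝ) ≤ T := by
      have : 1 ≤ T := by omega
      exact_mod_cast this
    have h2 : (1:ℝ) ≤ m := by
      have : 1 ≤ m := by omega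
      exact_mod_cast this
    have e : ((T:ℝ) - m) = 0 := by rw [hEq]; simp
    rw [e, zero_div, neg_zero, Real.exp_zero, ENNReal.ofReal_of_nonpos]
    · exact zero_le
    · nlinarith
  · have hTr : (0:ℝ) < (T : ℝ) - m := by
      have : (m:ℝ) < T := by exact_mod_cast hlt
      linarith
    have ha0 : 0 < a := by rw [ha]; positivity
    have hexp : ((T:ℝ) - m) / (18 * H1) = 2 * a / 25 := by
      rw [ha]; field_simp; norm_num
    have hphi := (potPhi_run S a ha0 T μ hμ hTmn T le_rfl).trans
      (potPhi_init hn S hS a ha0 T μ)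
    rw [← hexp] at hphi
    rw [ENNReal.ofReal_sub _ (by positivity), ENNReal.ofReal_one]
    refine (tsub_le_tsub_left hphi 1).trans ?_
    rw [tsub_le_iff_right]
    unfold ucbeOutput
    rw [PMF.bind_apply]
    unfold pmfEx
    rw [← ENNReal.tsum_add, ← (ucbeRun S a T).tsum_coe]
    refine ENNReal.tsum_le_tsum fun O => ?_
    by_cases hO : ucbeRun S a T O = 0
    · simp [hO]
    · rw [← mul_add]
      have hcard := run_card S a T hTmn O ((PMF.mem_support_iff _ _).2 hO)
      conv_lhs => rw [← mul_one (ucbeRun S a T O)]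
      refine mul_le_mul_right ?_ _
      by_cases hG : goodState S a μ O ∧ histState a μ O
      · refine le_trans ?_ le_self_add
        have hlt' := final_state hn S μ hμ istar hstar H1 hH0 hH1 T hlt a ha O hcard hG.1 hG.2
        have hset : (Finset.univ.filter fun i => ∀ k, empMean S O k ≤ empMean S O i) =
            {istar} := by
          ext i
          simp only [Finset.mem_filter, Finset.mem_univ, true_and, Finset.mem_singleton]
          constructor
          · intro h
            by_contra hi
            exact absurd (h istar) (not_le.2 (hlt' i hi))
          · rintro rfl k
            by_cases hk : k = i
            · rw [hk]
            · exact (hlt' k hk).le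
        rw [PMF.uniformOfFinset_apply_of_mem]
        · rw [hset]; simp
        · rw [hset]; simp
      · have e : potPhi S a T μ O = 1 := if_neg hG
        rw [e]
        exact le_add_self
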